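/- arXiv:2403.20198 — 4 statements merged into one kernel-verified Lean document; each statement's English description precedes it below -/
import Mathlib

section
/- Fix K ≥ 1 devices and real constants a_k ∈ ℝ, b_k > 0, c_k > 0, d_k ≥ 0 for k = 1, …, K, a total edge compute budget F > 0, and a delay bound T ∈ ℝ. Then the feasible region of problem P4, namely the set of tuples (τ_1, …, τ_K, g_1, …, g_K, f_1, …, f_K) ∈ ℝ^{3K} satisfying τ_k > 0, f_k > 0, g_k ≥ d_k, a_k + b_k·e^{g_k}/τ_k + c_k/f_k ≤ T for each k, and Σ_k f_k ≤ F, is a convex subset of ℝ^{3K}. -/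
open Real Finset

theorem exp_div_convex_aux {s t x y u v : ℝ} (hs : 0 ≤ s) (ht : 0 ≤ t) (hst : s + t = 1)
    (hu : 0 < u) (hv : 0 < v) :
    exp (s * x + t * y) / (s * u + t * v) ≤ s * (exp x / u) + t * (exp y / v) := by
  have h1 := strictConcaveOn_log_Ioi.concaveOn.2 (Set.mem_Ioi.2 hu) (Set.mem_Ioi.2 hv) hs ht hst
  have h2 := convexOn_exp.2 (Set.mem_univ (x - log u)) (Set.mem_univ (y - log v)) hs ht hst
  have hp : 0 < s * u + t * v := (convex_Ioi (0:ℝ)) hu hv hs ht hst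
  simp only [smul_eq_mul] at h1 h2
  rw [exp_sub, exp_sub, exp_log hu, exp_log hv] at h2
  refine le_trans ?_ h2
  calc exp (s * x + t * y) / (s * u + t * v)
      = exp (s * x + t * y - log (s * u + t * v)) := by rw [exp_sub, exp_log hp]
    _ ≤ _ := by
      apply exp_le_exp.2
      linarith

/-- The feasible region of problem P4 — tuples `(τ, g, f) ∈ (ℝ^K)³` with
`τ_k > 0`, `f_k > 0`, `g_k ≥ d_k`, `a_k + b_k·e^{g_k}/τ_k + c_k/f_k ≤ T` for each `k`,
and `Σ_k f_k ≤ F` — is a convex set. -/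
theorem feasible_region_convex (K : ℕ) (hK : 1 ≤ K)
    (a : Fin K → ℝ) (b c d : Fin K → ℝ)
    (hb : ∀ k, 0 < b k) (hc : ∀ k, 0 < c k) (hd : ∀ k, 0 ≤ d k)
    (F : ℝ) (hF : 0 < F) (T : ℝ) :
    Convex ℝ {p : (Fin K → ℝ) × (Fin K → ℝ) × (Fin K → ℝ) |
      (∀ k, 0 < p.1 k) ∧ (∀ k, 0 < p.2.2 k) ∧ (∀ k, d k ≤ p.2.1 k) ∧
      (∀ k, a k + b k * exp (p.2.1 k) / p.1 k + c k / p.2.2 k ≤ T) ∧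
      ∑ k, p.2.2 k ≤ F} := by
  rintro ⟨τ, g, f⟩ ⟨h1, h2, h3, h4, h5⟩ ⟨τ', g', f'⟩ ⟨k1, k2, k3, k4, k5⟩ s t hs ht hst
  simp only [Set.mem_setOf_eq, Prod.smul_mk, Prod.mk_add_mk, Pi.add_apply, Pi.smul_apply,
    smul_eq_mul] at *
  refine ⟨fun k => ?_, fun k => ?_, fun k => ?_, fun k => ?_, ?_⟩
  · exact (convex_Ioi (0:ℝ)) (h1 k) (k1 k) hs ht hst
  · exact (convex_Ioi (0:ℝ)) (h2 k) (k2 k) hs ht hst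
  · exact (convex_Ici (d k)) (h3 k) (k3 k) hs ht hst
  · have e1 := mul_le_mul_of_nonneg_left
      (exp_div_convex_aux (x := g k) (y := g' k) hs ht hst (h1 k) (k1 k)) (hb k).le
    have e2 := mul_le_mul_of_nonneg_left
      (exp_div_convex_aux (x := 0) (y := 0) hs ht hst (h2 k) (k2 k)) (hc k).le
    simp only [mul_zero, add_zero, exp_zero] at e2
    have e3 := mul_le_mul_of_nonneg_left (h4 k) hs
    have e4 := mul_le_mul_of_nonneg_left (k4 k) ht
    obtain rfl : t = 1 - s := by linarith
    simp only [div_eq_mul_inv, one_mul] at *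
    linarith
  · rw [sum_add_distrib, ← mul_sum, ← mul_sum]
    exact (convex_Iic F) h5 k5 hs ht hst
end

section
/- Fix K ≥ 1 devices and constants a_k ∈ ℝ, b_k > 0, c_k > 0, d_k ≥ 0, F > 0, T ∈ ℝ. Suppose (τ_1, …, τ_K, g_1, …, g_K, f_1, …, f_K) is feasible for problem P3, i.e., τ_k > 0, f_k > 0, g_k ≥ d_k, a_k + b_k·e^{g_k}/τ_k + c_k/f_k ≤ T for every k, and Σ_k f_k ≤ F. If for some index k₀ the delay constraint is strict, i.e., a_{k₀} + b_{k₀}·e^{g_{k₀}}/τ_{k₀} + c_{k₀}/f_{k₀} < T, then there exists another feasible point (with the same g_k's) whose objective value Σ_k τ_k is strictly smaller. In particular, every optimal solution of P3 satisfies all delay constraints with equality. -/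
open Real Finset

/-- Feasibility for problem P3 with fixed compression ratios: `τ_k > 0`, `f_k > 0`,
`g_k ≥ d_k`, `a_k + b_k·e^{g_k}/τ_k + c_k/f_k ≤ T` for every `k`, and `Σ_k f_k ≤ F`. -/
def FeasP3 (K : ℕ) (a b c d : Fin K → ℝ) (F T : ℝ)
    (τ g f : Fin K → ℝ) : Prop :=
  (∀ k, 0 < τ k) ∧ (∀ k, 0 < f k) ∧ (∀ k, d k ≤ g k) ∧
  (∀ k, a k + b k * exp (g k) / τ k + c k / f k ≤ T) ∧ (∑ k, f k ≤ F)

/-- Lemma 2: if a feasible point of P3 has a strict delay constraint at some device `k₀`,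
then there is another feasible point (with the same `g_k`'s) with strictly smaller
objective `Σ_k τ_k`; in particular every optimal solution of P3 satisfies all delay
constraints with equality. -/
theorem p3_delay_constraints_active (K : ℕ) (hK : 1 ≤ K)
    (a b c d : Fin K → ℝ) (hb : ∀ k, 0 < b k) (hc : ∀ k, 0 < c k) (hd : ∀ k, 0 ≤ d k)
    (F : ℝ) (hF : 0 < F) (T : ℝ) :
    (∀ τ g f : Fin K → ℝ, FeasP3 K a b c d F T τ g f →
      ∀ k₀ : Fin K, a k₀ + b k₀ * exp (g k₀) / τ k₀ + c k₀ / f k₀ < T →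
        ∃ τ' f' : Fin K → ℝ, FeasP3 K a b c d F T τ' g f' ∧
          ∑ k, τ' k < ∑ k, τ k) ∧
    (∀ τ g f : Fin K → ℝ, FeasP3 K a b c d F T τ g f →
      (∀ τ' g' f' : Fin K → ℝ, FeasP3 K a b c d F T τ' g' f' →
        ∑ k, τ k ≤ ∑ k, τ' k) →
      ∀ k, a k + b k * exp (g k) / τ k + c k / f k = T) := by
  have key : ∀ τ g f : Fin K → ℝ, FeasP3 K a b c d F T τ g f →
      ∀ k₀ : Fin K, a k₀ + b k₀ * exp (g k₀) / τ k₀ + c k₀ / f k₀ < T →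
        ∃ τ' f' : Fin K → ℝ, FeasP3 K a b c d F T τ' g f' ∧
          ∑ k, τ' k < ∑ k, τ k := by
    intro τ g f hfeas k₀ hlt
    obtain ⟨h1, h2, h3, h4, h5⟩ := hfeas
    have hB : 0 < b k₀ * exp (g k₀) := mul_pos (hb k₀) (exp_pos _)
    have hq : 0 < b k₀ * exp (g k₀) / τ k₀ := div_pos hB (h1 k₀)
    have hS : 0 < T - a k₀ - c k₀ / f k₀ := by linarith
    have hnew : b k₀ * exp (g k₀) / (T - a k₀ - c k₀ / f k₀) < τ k₀ := by
      rw [div_lt_iff₀ hS, mul_comm (τ k₀), ← div_lt_iff₀ (h1 k₀)]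
      linarith
    refine ⟨Function.update τ k₀ (b k₀ * exp (g k₀) / (T - a k₀ - c k₀ / f k₀)), f,
      ⟨?_, h2, h3, ?_, h5⟩, ?_⟩
    · intro k
      by_cases hk : k = k₀
      · subst hk
        simpa using div_pos hB hS
      · simpa [hk] using h1 k
    · intro k
      by_cases hk : k = k₀
      · subst hk
        rw [Function.update_self, div_div_cancel₀ hB.ne']
        linarith
      · rw [Function.update_of_ne hk]
        exact h4 k
    · apply Finset.sum_lt_sum
      · intro k _
        by_cases hk : k = k₀
        · subst hk
          rw [Function.update_self]
          exact hnew.le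
        · rw [Function.update_of_ne hk]
      · refine ⟨k₀, Finset.mem_univ _, ?_⟩
        rw [Function.update_self]
        exact hnew
  refine ⟨key, ?_⟩
  intro τ g f hfeas hopt k
  by_contra hne
  obtain ⟨τ', f', hf', hlt⟩ := key τ g f hfeas k (lt_of_le_of_ne (hfeas.2.2.2.1 k) hne)
  exact absurd (hopt τ' g f' hf') (not_le.mpr hlt)
end

section
/- Let L > 0, D₀ > 0, o > 0, T_s > 0, C^d > 0, M > 0, μ > 0, g ∈ ℝ, a ∈ ℝ, and T > a. Define f* = (L/(T − a))·(√(D₀·o·e^g·T_s·C^d/(M·μ)) + C^d) and τ* = (L/(T − a))·(D₀·o·e^g·T_s/M + √(μ·D₀·o·e^g·T_s·C^d/M)). Then a + (L·D₀·o·e^g·T_s)/(M·τ*) + L·C^d/f* = T; that is, the end-to-end delay constraint holds with equality at the claimed optimal point. -/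
open Real

/-- The closed-form optimal point of Theorem 3 satisfies the end-to-end delay
constraint with equality:
`a + (L·D₀·o·e^g·T_s)/(M·τ*) + L·C^d/f* = T`. -/
theorem optimal_point_delay_equality (L D₀ o Ts Cd M μ : ℝ) (g a T : ℝ)
    (hL : 0 < L) (hD₀ : 0 < D₀) (ho : 0 < o) (hTs : 0 < Ts) (hCd : 0 < Cd)
    (hM : 0 < M) (hμ : 0 < μ) (hT : a < T) :
    a + L * D₀ * o * exp g * Ts /
        (M * (L / (T - a) * (D₀ * o * exp g * Ts / M +
          Real.sqrt (μ * D₀ * o * exp g * Ts * Cd / M)))) +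
      L * Cd / (L / (T - a) * (Real.sqrt (D₀ * o * exp g * Ts * Cd / (M * μ)) + Cd))
      = T := by
  have hE : 0 < exp g := exp_pos g
  have hd : 0 < T - a := sub_pos.mpr hT
  obtain ⟨K, hK⟩ : ∃ K, K = D₀ * o * exp g * Ts / M := ⟨_, rfl⟩
  have hK0 : 0 < K := by rw [hK]; positivity
  obtain ⟨S, hS⟩ : ∃ S, S = Real.sqrt (K * Cd / μ) := ⟨_, rfl⟩
  have hS0 : 0 < S := by rw [hS]; positivity
  have hSS : μ * (S * S) = K * Cd := by
    rw [hS, Real.mul_self_sqrt (by positivity)]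
    field_simp
  have h1 : Real.sqrt (D₀ * o * exp g * Ts * Cd / (M * μ)) = S := by
    rw [hS, hK]
    congr 1
    field_simp
  have h2 : Real.sqrt (μ * D₀ * o * exp g * Ts * Cd / M) = μ * S := by
    have : μ * D₀ * o * exp g * Ts * Cd / M = (μ * S) * (μ * S) := by
      have e : (μ * S) * (μ * S) = μ * (K * Cd) := by rw [← hSS]; ring
      rw [e, hK]
      field_simp
    rw [this, Real.sqrt_mul_self (by positivity)]
  have h3 : L * D₀ * o * exp g * Ts = L * (M * K) := by
    rw [hK]
    field_simp
  rw [h1, h2, h3, ← hK]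
  have hKe : K = μ * (S * S) / Cd := by
    rw [hSS]
    field_simp
  have t1 : L * (M * K) / (M * (L / (T - a) * (K + μ * S))) = (T - a) * (S / (S + Cd)) := by
    have : K / (K + μ * S) = S / (S + Cd) := by
      rw [div_eq_div_iff (by positivity) (by positivity)]
      linear_combination -hSS
    rw [← this]
    have : K + μ * S ≠ 0 := by positivity
    field_simp
  have t2 : L * Cd / (L / (T - a) * (S + Cd)) = (T - a) * (Cd / (S + Cd)) := by
    field_simp
  rw [t1, t2]
  have : S + Cd ≠ 0 := by positivity
  field_simp
  ring
end

section
/- Let L > 0, D₀ > 0, o > 0, T_s > 0, C^d > 0, M > 0, μ > 0, g ∈ ℝ, a ∈ ℝ, T > a, and define τ* = (L/(T − a))·(D₀·o·e^g·T_s/M + √(μ·D₀·o·e^g·T_s·C^d/M)) and f* = (L/(T − a))·(√(D₀·o·e^g·T_s·C^d/(M·μ)) + C^d). Set λ = M·(τ*)²/(L·D₀·o·T_s·e^g). Then λ > 0 and the two KKT stationarity conditions hold: 1 − λ·(L·D₀·o·T_s/M)·e^g/(τ*)² = 0 and −λ·L·C^d/(f*)² + μ = 0. -/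
open Real

/-- The closed-form solution of Theorem 3 satisfies the KKT stationarity conditions of
problem P4: with `λ = M·(τ*)²/(L·D₀·o·T_s·e^g)` one has `λ > 0`,
`1 − λ·(L·D₀·o·T_s/M)·e^g/(τ*)² = 0` and `−λ·L·C^d/(f*)² + μ = 0`. -/
theorem kkt_stationarity (L D₀ o Ts Cd M μ g a T : ℝ)
    (hL : 0 < L) (hD₀ : 0 < D₀) (ho : 0 < o) (hTs : 0 < Ts) (hCd : 0 < Cd)
    (hM : 0 < M) (hμ : 0 < μ) (hT : a < T) :
    let τs := L / (T - a) * (D₀ * o * exp g * Ts / M +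
        Real.sqrt (μ * D₀ * o * exp g * Ts * Cd / M))
    let fs := L / (T - a) * (Real.sqrt (D₀ * o * exp g * Ts * Cd / (M * μ)) + Cd)
    let lam := M * τs ^ 2 / (L * D₀ * o * Ts * exp g)
    0 < lam ∧
      1 - lam * (L * D₀ * o * Ts / M) * exp g / τs ^ 2 = 0 ∧
      -(lam * L * Cd / fs ^ 2) + μ = 0 := by
  intro τs fs lam
  have he : 0 < exp g := exp_pos g
  have hc : 0 < L / (T - a) := div_pos hL (sub_pos.mpr hT)
  have hτ : 0 < τs := by
    apply mul_pos hc
    positivity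
  have hf : 0 < fs := by
    apply mul_pos hc
    positivity
  have hlam : 0 < lam := by
    show 0 < M * τs ^ 2 / (L * D₀ * o * Ts * exp g)
    positivity
  have key : M * τs ^ 2 * Cd = μ * (D₀ * o * exp g * Ts) * fs ^ 2 := by
    have h1 : Real.sqrt (μ * D₀ * o * exp g * Ts * Cd / M)
        = μ * Real.sqrt (D₀ * o * exp g * Ts * Cd / (M * μ)) := by
      rw [Real.sqrt_eq_iff_mul_self_eq (by positivity) (by positivity)]
      have h := Real.mul_self_sqrt
        (show 0 ≤ D₀ * o * exp g * Ts * Cd / (M * μ) by positivity)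
      rw [mul_mul_mul_comm, h]
      field_simp
    have h2 := Real.sq_sqrt
      (show 0 ≤ D₀ * o * exp g * Ts * Cd / (M * μ) by positivity)
    simp only [τs, fs]
    rw [h1]
    generalize Real.sqrt (D₀ * o * exp g * Ts * Cd / (M * μ)) = s at *
    generalize L / (T - a) = c at *
    have h3 : D₀ * o * exp g * Ts * Cd = s ^ 2 * (M * μ) := by
      rw [h2]; field_simp
    generalize D₀ * o * exp g * Ts = B at *
    have h4 : M * (B / M) = B := by field_simp
    generalize B / M = A at *
    subst h4
    have h5 : A * Cd = s ^ 2 * μ := by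
      apply mul_left_cancel₀ hM.ne'
      linear_combination h3
    linear_combination (c ^ 2 * M * (A - μ * Cd)) * h5
  refine ⟨hlam, ?_, ?_⟩
  · have : lam = M * τs ^ 2 / (L * D₀ * o * Ts * exp g) := rfl
    rw [this]
    clear_value τs
    field_simp
    ring
  · have : lam = M * τs ^ 2 / (L * D₀ * o * Ts * exp g) := rfl
    have h : lam * L * Cd / fs ^ 2 = μ := by
      rw [this, div_eq_iff (by positivity)]
      clear_value τs fs
      field_simp
      linear_combination key
    rw [h]; ring
end
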